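/- For every integer k ≥ 2 there exists an integer n(k) such that for every integer n > n(k) there exists a transversal design TD(k, n). -/

import Mathlib

/-!
A transversal design `TD(k,n)` is the same thing as an orthogonal array of strength two with `k`
columns on `n` symbols (`IsOA.transversalDesign`), so the work is done with arrays.

*MacNeish.* The affine lines over a field with at least `k` elements form an array, and arrays
multiply. Hence there is an array on `n ≥ 1` symbols whenever each prime divisor of `n` has some
power that divides `n` and is at least `k`; such `n` are called `k`-`Rough` here.

*Wilson.* If there are arrays with `k` columns on `m`, `m + 1` and `u` symbols, one with `k + 1`
columns on `t` symbols, and `u ≤ t`, then there is an array with `k` columns on `m * t + u` symbols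
(`HasOA.wilson`).

*Arithmetic.* It remains to write every large `n` as `m * t + u` with `u ≤ t` and `m`, `m + 1`, `t`,
`u` all rough (`exists_rough_decomposition`). Let `K = k + 1`, let `D` be the product of the
primes `p ≤ K` dividing `n` and `E` the product of the other primes `p ≤ K`. Choose `m > 0` bounded
in terms of `k` with `m ≡ 0` modulo `E ^ K` and `m ≡ -1` modulo `D ^ K`; then `m` and `m + 1` are
rough. Choose `t ≡ 1` modulo `D * E` as large as possible with `m * t ≤ n`. A prime `p ∣ E` does not
divide `u = n - m * t` because `u ≡ n`, and a prime `p ∣ D` does not divide `u` because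
`u ≡ n + t ≡ 1`. So `t` and `u` have no prime factors `≤ K`, and `u` is bounded in terms of `k`
while `t` grows with `n`.
-/

/-- A transversal design `TD(k,n)` on a point type `α` (with `k*n` points):
`n^2` blocks of size `k`, a partition of the points into `k` groups of size `n`,
each block meets each group in exactly one point, and any two points in
different groups lie together in exactly one block. -/
structure TransversalDesign (α : Type) [DecidableEq α] (k n : ℕ) where
  groups : Finset (Finset α)
  blocks : Finset (Finset α)
  groups_card : groups.card = k
  group_size : ∀ G ∈ groups, G.card = n
  groups_partition : ∀ x : α, ∃! G, G ∈ groups ∧ x ∈ G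
  blocks_card : blocks.card = n ^ 2
  block_size : ∀ B ∈ blocks, B.card = k
  block_meets : ∀ B ∈ blocks, ∀ G ∈ groups, (B ∩ G).card = 1
  pair_cover : ∀ x y : α, (∀ G ∈ groups, ¬(x ∈ G ∧ y ∈ G)) →
    ∃! B, B ∈ blocks ∧ x ∈ B ∧ y ∈ B

/-! ### Orthogonal arrays -/

/-- `S`, viewed as a set of rows, is an orthogonal array of strength two and index one with columns
`Fin k` and symbols `X`: in any two distinct columns, each pair of symbols occurs in exactly one
row. -/
structure IsOA {k : ℕ} {X : Type} (S : Set (Fin k → X)) : Prop where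
  ex : ∀ i j, i ≠ j → ∀ x y, ∃ r ∈ S, r i = x ∧ r j = y
  uniq : ∀ i j, i ≠ j → ∀ r ∈ S, ∀ r' ∈ S, r i = r' i → r j = r' j → r = r'

/-- There is an orthogonal array with `k` columns on the symbol set `X`. -/
def HasOA (k : ℕ) (X : Type) : Prop := ∃ S : Set (Fin k → X), IsOA S

/-- The symbols may be relabelled by a separate bijection in each column. -/
lemma IsOA.permute {k : ℕ} {X Y : Type} {S : Set (Fin k → X)} (h : IsOA S)
    (σ : Fin k → Y ≃ X) : IsOA {r : Fin k → Y | (fun i => σ i (r i)) ∈ S} where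
  ex i j hij x y := by
    obtain ⟨r, hr, h1, h2⟩ := h.ex i j hij (σ i x) (σ j y)
    exact ⟨fun l => (σ l).symm (r l), by simpa using hr, by simp [h1], by simp [h2]⟩
  uniq i j hij r hr r' hr' h1 h2 := by
    have := h.uniq i j hij _ hr _ hr' (by simp [h1]) (by simp [h2])
    funext l
    exact (σ l).injective (congrFun this l)

lemma HasOA.congr {k : ℕ} {X Y : Type} (e : Y ≃ X) (h : HasOA k X) : HasOA k Y := by
  obtain ⟨S, hS⟩ := h
  exact ⟨_, hS.permute fun _ => e⟩

/-- An array may be relabelled so that a prescribed constant row occurs. -/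
lemma HasOA.exists_const {k : ℕ} (hk : 2 ≤ k) {X : Type} (x : X) (h : HasOA k X) :
    ∃ S : Set (Fin k → X), IsOA S ∧ (fun _ => x) ∈ S := by
  classical
  obtain ⟨S, hS⟩ := h
  obtain ⟨r, hr, -⟩ := hS.ex ⟨0, by omega⟩ ⟨1, by omega⟩ (by simp) x x
  refine ⟨_, hS.permute fun i => Equiv.swap x (r i), ?_⟩
  simpa using hr

lemma HasOA.of_unique {k : ℕ} {X : Type} [Unique X] : HasOA k X :=
  ⟨Set.univ, fun _ _ _ _ _ => ⟨fun _ => default, trivial, Subsingleton.elim _ _,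
    Subsingleton.elim _ _⟩, fun _ _ _ _ _ _ _ _ _ => Subsingleton.elim _ _⟩

lemma HasOA.prod {k : ℕ} {X Y : Type} (hX : HasOA k X) (hY : HasOA k Y) :
    HasOA k (X × Y) := by
  obtain ⟨S, hS⟩ := hX
  obtain ⟨T, hT⟩ := hY
  refine ⟨{r | (fun i => (r i).1) ∈ S ∧ (fun i => (r i).2) ∈ T}, ?_, ?_⟩
  · rintro i j hij ⟨x, x'⟩ ⟨y, y'⟩
    obtain ⟨r, hr, h1, h2⟩ := hS.ex i j hij x y
    obtain ⟨s, hs, h3, h4⟩ := hT.ex i j hij x' y'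
    exact ⟨fun l => (r l, s l), ⟨hr, hs⟩, by simp [h1, h3], by simp [h2, h4]⟩
  · rintro i j hij r ⟨hr, hr'⟩ s ⟨hs, hs'⟩ h1 h2
    have e1 := hS.uniq i j hij _ hr _ hs (by simp [h1]) (by simp [h2])
    have e2 := hT.uniq i j hij _ hr' _ hs' (by simp [h1]) (by simp [h2])
    funext l
    exact Prod.ext (congrFun e1 l) (congrFun e2 l)

/-- The rows are the affine functions `z ↦ a * z + b`, evaluated at `k` distinct field elements. -/
lemma HasOA.of_field {k : ℕ} {F : Type} [Field F] (f : Fin k ↪ F) : HasOA k F := by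
  refine ⟨{r | ∃ a b : F, r = fun i => a * f i + b}, ?_, ?_⟩
  · intro i j hij x y
    have hne : f i - f j ≠ 0 := sub_ne_zero.2 fun h => hij (f.injective h)
    refine ⟨_, ⟨(x - y) / (f i - f j), x - (x - y) / (f i - f j) * f i, rfl⟩, by ring, ?_⟩
    field_simp
    ring
  · rintro i j hij _ ⟨a, b, rfl⟩ _ ⟨c, d, rfl⟩ h1 h2
    have hne : f i - f j ≠ 0 := sub_ne_zero.2 fun h => hij (f.injective h)
    have hac : a = c := by
      have : (a - c) * (f i - f j) = 0 := by linear_combination h1 - h2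
      exact sub_eq_zero.1 ((mul_eq_zero.1 this).resolve_right hne)
    subst hac
    have hbd : b = d := by simpa using h1
    rw [hbd]

/-! ### Wilson's construction -/

/-- The row of Wilson's array built from a row `a` whose extra symbol is the point `u`, together
with a row `c` over `M ∪ {∞}`: the symbol `∞` is replaced by the new point `u`. -/
def wilsonRow {k : ℕ} {T M U : Type} (a : Fin (k + 1) → T) (c : Fin k → Option M) (u : U) :
    Fin k → (T × M) ⊕ U := fun i =>
  match c i with
  | some m => Sum.inl (a i.castSucc, m)
  | none => Sum.inr u

lemma wilsonRow_eq_inl {k : ℕ} {T M U : Type} {a : Fin (k + 1) → T} {c : Fin k → Option M} {u : U}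
    {i : Fin k} {t : T} {m : M} :
    wilsonRow a c u i = Sum.inl (t, m) ↔ a i.castSucc = t ∧ c i = some m := by
  unfold wilsonRow
  cases c i <;> simp

lemma wilsonRow_eq_inr {k : ℕ} {T M U : Type} {a : Fin (k + 1) → T} {c : Fin k → Option M} {u : U}
    {i : Fin k} {v : U} :
    wilsonRow a c u i = Sum.inr v ↔ u = v ∧ c i = none := by
  unfold wilsonRow
  cases c i <;> simp

/-- Wilson's construction. The last column of the array on `T` is truncated to the image of `U`;
rows whose last entry is cut off are inflated by an array on `M`, the others by an array on `M ∪ {∞}`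
without its constant row `∞`, and an array on `U` fills the remaining hole. -/
lemma HasOA.wilson {k : ℕ} (hk : 2 ≤ k) {T M U : Type} (e : U ↪ T)
    (hT : HasOA (k + 1) T) (hM : HasOA k M) (hM' : HasOA k (Option M)) (hU : HasOA k U) :
    HasOA k ((T × M) ⊕ U) := by
  obtain ⟨A, hA⟩ := hT
  obtain ⟨B, hB⟩ := hM
  obtain ⟨C, hC, hC0⟩ := hM'.exists_const hk none
  obtain ⟨D, hD⟩ := hU
  have hcs : ∀ {i j : Fin k}, i ≠ j → i.castSucc ≠ j.castSucc := by
    intro i j hij h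
    exact hij (Fin.castSucc_injective _ h)
  have hlast : ∀ i : Fin k, i.castSucc ≠ Fin.last k := fun i => Fin.castSucc_ne_last i
  -- A row over `M ∪ {∞}` with two entries `∞` is the constant row.
  have hnn : ∀ c ∈ C, c ≠ (fun _ => none) → ∀ i j, i ≠ j → c i = none → c j = none → False :=
    fun c hc hne i j hij h1 h2 => hne (hC.uniq i j hij c hc _ hC0 h1 h2)
  let R1 : Set (Fin k → (T × M) ⊕ U) := {r | ∃ a ∈ A, ∃ b ∈ B, a (Fin.last k) ∉ Set.range e ∧
    r = fun i => Sum.inl (a i.castSucc, b i)}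
  let R2 : Set (Fin k → (T × M) ⊕ U) := {r | ∃ a ∈ A, ∃ c ∈ C, ∃ u, a (Fin.last k) = e u ∧
    c ≠ (fun _ => none) ∧ r = wilsonRow a c u}
  let R3 : Set (Fin k → (T × M) ⊕ U) := {r | ∃ d ∈ D, r = fun i => Sum.inr (d i)}
  refine ⟨R1 ∪ R2 ∪ R3, ?_, ?_⟩
  · intro i j hij x y
    rcases x with ⟨t, m⟩ | u <;> rcases y with ⟨t', m'⟩ | u'
    · obtain ⟨a, ha, h1, h2⟩ := hA.ex _ _ (hcs hij) t t'
      by_cases hz : a (Fin.last k) ∈ Set.range e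
      · obtain ⟨u, hu⟩ := hz
        obtain ⟨c, hc, h3, h4⟩ := hC.ex i j hij (some m) (some m')
        refine ⟨_, Or.inl (Or.inr ⟨a, ha, c, hc, u, hu.symm, ?_, rfl⟩), ?_, ?_⟩
        · rintro rfl; simp at h3
        · exact wilsonRow_eq_inl.2 ⟨h1, h3⟩
        · exact wilsonRow_eq_inl.2 ⟨h2, h4⟩
      · obtain ⟨b, hb, h3, h4⟩ := hB.ex i j hij m m'
        exact ⟨_, Or.inl (Or.inl ⟨a, ha, b, hb, hz, rfl⟩), by simp [h1, h3], by simp [h2, h4]⟩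
    · obtain ⟨a, ha, h1, h2⟩ := hA.ex _ _ (hlast i) t (e u')
      obtain ⟨c, hc, h3, h4⟩ := hC.ex i j hij (some m) none
      refine ⟨_, Or.inl (Or.inr ⟨a, ha, c, hc, u', h2, ?_, rfl⟩), ?_, ?_⟩
      · rintro rfl; simp at h3
      · exact wilsonRow_eq_inl.2 ⟨h1, h3⟩
      · exact wilsonRow_eq_inr.2 ⟨rfl, h4⟩
    · obtain ⟨a, ha, h1, h2⟩ := hA.ex _ _ (hlast j) t' (e u)
      obtain ⟨c, hc, h3, h4⟩ := hC.ex i j hij none (some m')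
      refine ⟨_, Or.inl (Or.inr ⟨a, ha, c, hc, u, h2, ?_, rfl⟩), ?_, ?_⟩
      · rintro rfl; simp at h4
      · exact wilsonRow_eq_inr.2 ⟨rfl, h3⟩
      · exact wilsonRow_eq_inl.2 ⟨h1, h4⟩
    · obtain ⟨d, hd, h1, h2⟩ := hD.ex i j hij u u'
      exact ⟨_, Or.inr ⟨d, hd, rfl⟩, by simp [h1], by simp [h2]⟩
  · intro i j hij
    have h12 : ∀ r ∈ R1, ∀ r' ∈ R2, r i = r' i → r j = r' j → False := by
      rintro _ ⟨a, ha, b, hb, hz, rfl⟩ _ ⟨a', ha', c, hc, u, hu, -, rfl⟩ h1 h2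
      have h1 := wilsonRow_eq_inl.1 h1.symm
      have h2 := wilsonRow_eq_inl.1 h2.symm
      have := hA.uniq _ _ (hcs hij) a' ha' a ha h1.1 h2.1
      exact hz ⟨u, by rw [← this, hu]⟩
    have h13 : ∀ r ∈ R1, ∀ r' ∈ R3, r i = r' i → False := by
      rintro _ ⟨a, ha, b, hb, hz, rfl⟩ _ ⟨d, hd, rfl⟩ h1
      simp at h1
    have h23 : ∀ r ∈ R2, ∀ r' ∈ R3, r i = r' i → r j = r' j → False := by
      rintro _ ⟨a', ha', c, hc, u, hu, hne, rfl⟩ _ ⟨d, hd, rfl⟩ h1 h2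
      exact hnn c hc hne i j hij (wilsonRow_eq_inr.1 h1).2 (wilsonRow_eq_inr.1 h2).2
    rintro r ((hr | hr) | hr) r' ((hr' | hr') | hr') h1 h2
    · obtain ⟨a, ha, b, hb, hz, rfl⟩ := hr
      obtain ⟨a', ha', b', hb', hz', rfl⟩ := hr'
      simp only [Sum.inl.injEq, Prod.mk.injEq] at h1 h2
      rw [hA.uniq _ _ (hcs hij) a ha a' ha' h1.1 h2.1, hB.uniq _ _ hij b hb b' hb' h1.2 h2.2]
    · exact (h12 _ hr _ hr' h1 h2).elim
    · exact (h13 _ hr _ hr' h1).elim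
    · exact (h12 _ hr' _ hr h1.symm h2.symm).elim
    · obtain ⟨a, ha, c, hc, u, hu, hne, rfl⟩ := hr
      obtain ⟨a', ha', c', hc', u', hu', hne', rfl⟩ := hr'
      have huu : u = u' → a (Fin.last k) = a' (Fin.last k) := fun h => by rw [hu, hu', h]
      -- Either the two finite entries determine `a`, or one finite entry and `u` do.
      have key : a = a' ∧ c i = c' i ∧ c j = c' j := by
        rcases hci : c i with _ | m <;> rcases hcj : c j with _ | m'
        · exact (hnn c hc hne i j hij hci hcj).elim
        · have h3 := wilsonRow_eq_inr.1 (h1.symm.trans (wilsonRow_eq_inr.2 ⟨rfl, hci⟩))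
          have h4 := wilsonRow_eq_inl.1 (h2.symm.trans (wilsonRow_eq_inl.2 ⟨rfl, hcj⟩))
          exact ⟨hA.uniq _ _ (hlast j) a ha a' ha' h4.1.symm (huu h3.1.symm),
            h3.2.symm, h4.2.symm⟩
        · have h3 := wilsonRow_eq_inr.1 (h2.symm.trans (wilsonRow_eq_inr.2 ⟨rfl, hcj⟩))
          have h4 := wilsonRow_eq_inl.1 (h1.symm.trans (wilsonRow_eq_inl.2 ⟨rfl, hci⟩))
          exact ⟨hA.uniq _ _ (hlast i) a ha a' ha' h4.1.symm (huu h3.1.symm),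
            h4.2.symm, h3.2.symm⟩
        · have h3 := wilsonRow_eq_inl.1 (h1.symm.trans (wilsonRow_eq_inl.2 ⟨rfl, hci⟩))
          have h4 := wilsonRow_eq_inl.1 (h2.symm.trans (wilsonRow_eq_inl.2 ⟨rfl, hcj⟩))
          exact ⟨hA.uniq _ _ (hcs hij) a ha a' ha' h3.1.symm h4.1.symm, h3.2.symm, h4.2.symm⟩
      obtain ⟨rfl, h3, h4⟩ := key
      have huu' : u = u' := e.injective (hu.symm.trans hu')
      rw [hC.uniq i j hij c hc c' hc' h3 h4, huu']
    · exact (h23 _ hr _ hr' h1 h2).elim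
    · exact (h13 _ hr' _ hr h1.symm).elim
    · exact (h23 _ hr' _ hr h1.symm h2.symm).elim
    · obtain ⟨d, hd, rfl⟩ := hr
      obtain ⟨d', hd', rfl⟩ := hr'
      simp only [Sum.inr.injEq] at h1 h2
      rw [hD.uniq i j hij d hd d' hd' h1 h2]

/-! ### MacNeish's theorem -/

/-- Every prime divisor of `n` has a power that divides `n` and is at least `k`. -/
def Rough (k n : ℕ) : Prop := ∀ p, p.Prime → p ∣ n → ∃ e, p ^ e ∣ n ∧ k ≤ p ^ e

lemma Rough.mono {k l n : ℕ} (h : Rough l n) (hkl : k ≤ l) : Rough k n := fun p hp hpn =>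
  let ⟨e, h1, h2⟩ := h p hp hpn
  ⟨e, h1, hkl.trans h2⟩

lemma rough_of_forall_lt {k n : ℕ} (h : ∀ p, p.Prime → p ∣ n → k < p) : Rough k n :=
  fun p hp hpn => ⟨1, by simpa using hpn, by simpa using (h p hp hpn).le⟩

lemma Rough.of_mul_left {k a b : ℕ} (hab : a.Coprime b) (h : Rough k (a * b)) : Rough k a := by
  intro p hp hpa
  obtain ⟨e, h1, h2⟩ := h p hp (hpa.mul_right b)
  exact ⟨e, ((hab.coprime_dvd_left hpa).pow_left e).dvd_of_dvd_mul_right h1, h2⟩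

lemma Rough.hasOA {k : ℕ} (n : ℕ) : n ≠ 0 → Rough k n → HasOA k (Fin n) := by
  induction n using Nat.recOnPosPrimePosCoprime with
  | zero => exact fun h => (h rfl).elim
  | one => exact fun _ _ => HasOA.of_unique
  | prime_pow p n hp hn =>
    intro _ h
    obtain ⟨e, h1, h2⟩ := h p hp (dvd_pow_self p hn.ne')
    have hle : k ≤ p ^ n := h2.trans (Nat.le_of_dvd (pow_pos hp.pos n) h1)
    have : Fact p.Prime := ⟨hp⟩
    have hcard : Nat.card (GaloisField p n) = p ^ n := GaloisField.card p n hn.ne'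
    have : Finite (GaloisField p n) :=
      Nat.finite_of_card_ne_zero (by rw [hcard]; exact (pow_pos hp.pos n).ne')
    let g : GaloisField p n ≃ Fin (p ^ n) := Finite.equivFinOfCardEq hcard
    exact (HasOA.of_field ((Fin.castLEEmb hle).trans g.symm.toEmbedding)).congr g.symm
  | coprime a b ha hb hab iha ihb =>
    intro _ h
    have h1 := iha (by omega) (h.of_mul_left hab)
    have h2 := ihb (by omega) (Rough.of_mul_left hab.symm (by rwa [mul_comm]))
    exact (h1.prod h2).congr finProdFinEquiv.symm

/-! ### Arithmetic -/

/-- Every large `n` is of the form `m * t + u` with `u ≤ t` and `m`, `m + 1`, `t`, `u` positive and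
rough. -/
lemma exists_rough_decomposition (K : ℕ) (hK : 2 ≤ K) : ∃ N : ℕ, ∀ n, N < n → ∃ m t u : ℕ,
    n = m * t + u ∧ u ≤ t ∧ m ≠ 0 ∧ t ≠ 0 ∧ u ≠ 0 ∧
    Rough K m ∧ Rough K (m + 1) ∧ Rough K t ∧ Rough K u := by
  classical
  set Q : Finset ℕ := (Finset.range (K + 1)).filter Nat.Prime with hQ
  set P : ℕ := ∏ p ∈ Q, p with hP
  have hPpos : 0 < P := Finset.prod_pos fun p hp => (Finset.mem_filter.1 hp).2.pos
  set M : ℕ := 2 * P ^ K with hM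
  refine ⟨M * (M * (P + 1) + P + 2), fun n hn => ?_⟩
  set D : ℕ := ∏ p ∈ Q with p ∣ n, p with hD
  set E : ℕ := ∏ p ∈ Q with ¬ p ∣ n, p with hE
  have hDE : D * E = P := Finset.prod_filter_mul_prod_filter_not Q (fun p => p ∣ n) (fun p => p)
  have hcop : D.Coprime E := by
    refine Nat.Coprime.prod_left fun p hp => Nat.Coprime.prod_right fun q hq => ?_
    simp only [hQ, Finset.mem_filter] at hp hq
    refine (Nat.coprime_primes hp.1.2 hq.1.2).2 ?_
    rintro rfl
    exact hq.2 hp.2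
  have hDdvd : ∀ p, p.Prime → p ≤ K → p ∣ n → p ∣ D := fun p hp hpK hpn =>
    Finset.dvd_prod_of_mem _ (by simp [hQ, hp, hpn]; omega)
  have hEdvd : ∀ p, p.Prime → p ≤ K → ¬ p ∣ n → p ∣ E := fun p hp hpK hpn =>
    Finset.dvd_prod_of_mem _ (by simp [hQ, hp, hpn]; omega)
  have hDpos : 0 < D := Nat.pos_of_mul_pos_right (hDE ▸ hPpos)
  have hEpos : 0 < E := Nat.pos_of_mul_pos_left (hDE ▸ hPpos)
  -- `m` is positive, bounded by `M`, divisible by `E ^ K`, and `-1` modulo `D ^ K`.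
  obtain ⟨m, hm0, hmM, hmE, hmD⟩ : ∃ m, 0 < m ∧ m ≤ M ∧ E ^ K ∣ m ∧ D ^ K ∣ m + 1 := by
    have hc : (E ^ K).Coprime (D ^ K) := Nat.Coprime.pow _ _ hcop.symm
    have hDK := pow_pos hDpos K
    have hEK := pow_pos hEpos K
    obtain ⟨m, h1, h2⟩ := Nat.chineseRemainder hc 0 (D ^ K - 1)
    have hlt := Nat.mod_lt m (Nat.mul_pos hEK hDK)
    refine ⟨m % (E ^ K * D ^ K) + E ^ K * D ^ K, by positivity, ?_, ?_, ?_⟩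
    · have : E ^ K * D ^ K = P ^ K := by rw [← mul_pow, mul_comm, hDE]
      rw [hM, ← this]
      omega
    · refine dvd_add ?_ (dvd_mul_right _ _)
      exact (Nat.dvd_mod_iff (dvd_mul_right _ _)).2 ((Nat.modEq_zero_iff_dvd).1 h1)
    · have h3 : D ^ K ∣ m + 1 := by
        refine (Nat.modEq_zero_iff_dvd).1 ((h2.add_right 1).trans ?_)
        rw [Nat.sub_add_cancel hDK]
        simp [Nat.ModEq]
      have h4 : m + 1 + E ^ K * D ^ K = (m % (E ^ K * D ^ K) + E ^ K * D ^ K + 1) +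
          E ^ K * D ^ K * (m / (E ^ K * D ^ K)) := by
        have := Nat.mod_add_div m (E ^ K * D ^ K)
        omega
      have h5 : D ^ K ∣ m + 1 + E ^ K * D ^ K := dvd_add h3 (dvd_mul_left _ _)
      rw [h4] at h5
      exact (Nat.dvd_add_left ((dvd_mul_left _ _).mul_right _)).1 h5
  -- `t` is the largest number congruent to `1` modulo `P` and at most `q = n / m`.
  obtain ⟨q, hq⟩ : ∃ q, q = n / m := ⟨_, rfl⟩
  have hqn : m * q ≤ n := hq ▸ Nat.mul_div_le n m
  have hnq : n < m * (q + 1) := hq ▸ Nat.lt_mul_div_succ n hm0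
  have hqlarge : M * (P + 1) + P + 1 < q := by
    by_contra! h
    have : m * (q + 1) ≤ M * (M * (P + 1) + P + 2) := Nat.mul_le_mul hmM (by omega)
    omega
  obtain ⟨s, hs⟩ : ∃ s, s = (q - 1) / P := ⟨_, rfl⟩
  have hs1 : P * s ≤ q - 1 := hs ▸ Nat.mul_div_le _ _
  have hs2 : q - 1 < P * (s + 1) := hs ▸ Nat.lt_mul_div_succ _ hPpos
  have htq : P * s + 1 ≤ q := by omega
  have hqt : q < P * s + 1 + P := by
    rw [mul_add] at hs2
    omega
  have hmt : m * (P * s + 1) ≤ n := (Nat.mul_le_mul_left m htq).trans hqn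
  obtain ⟨u, hu⟩ := Nat.exists_eq_add_of_le hmt
  have hut : u ≤ P * s + 1 := by
    have h1 : m * (q + 1) ≤ m * (P * s + 1) + m * (P + 1) := by
      rw [← mul_add]
      exact Nat.mul_le_mul_left m (by omega)
    have h2 : m * (P + 1) ≤ M * (P + 1) := Nat.mul_le_mul_right _ hmM
    omega
  have hK0 : ∀ p, p.Prime → p ≤ K → K ≠ 0 := fun p hp hpK => by
    have := hp.pos
    omega
  have hcaseD : ∀ p, p.Prime → p ≤ K → p ∣ n → p ^ K ∣ m + 1 := fun p hp hpK hpn =>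
    (pow_dvd_pow_of_dvd (hDdvd p hp hpK hpn) K).trans hmD
  have hcaseE : ∀ p, p.Prime → p ≤ K → ¬ p ∣ n → p ^ K ∣ m := fun p hp hpK hpn =>
    (pow_dvd_pow_of_dvd (hEdvd p hp hpK hpn) K).trans hmE
  have hnot : ∀ p, p.Prime → p ∣ m → p ∣ m + 1 → False := fun p hp h1 h2 =>
    hp.one_lt.ne' (Nat.dvd_one.1 ((Nat.dvd_add_right h1).1 h2))
  have hpP : ∀ p, p.Prime → p ≤ K → p ∣ P := fun p hp hpK =>
    Finset.dvd_prod_of_mem _ (by simp [hQ, hp]; omega)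
  have ht : ∀ p, p.Prime → p ∣ P * s + 1 → K < p := by
    intro p hp hpt
    by_contra! hpK
    exact hp.one_lt.ne' (Nat.dvd_one.1 ((Nat.dvd_add_right ((hpP p hp hpK).mul_right s)).1 hpt))
  have hu' : ∀ p, p.Prime → p ∣ u → K < p := by
    intro p hp hpu
    by_contra! hpK
    by_cases hpn : p ∣ n
    · have h1 : p ∣ m * (P * s + 1) := (Nat.dvd_add_left hpu).1 (hu ▸ hpn)
      rcases hp.dvd_mul.1 h1 with h2 | h2
      · exact hnot p hp h2 ((dvd_pow_self p (hK0 p hp hpK)).trans (hcaseD p hp hpK hpn))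
      · exact absurd (ht p hp h2) (by omega)
    · refine hpn (hu ▸ dvd_add (Dvd.dvd.mul_right ?_ _) hpu)
      exact (dvd_pow_self p (hK0 p hp hpK)).trans (hcaseE p hp hpK hpn)
  refine ⟨m, P * s + 1, u, hu, hut, hm0.ne', by omega, ?_, ?_, ?_, rough_of_forall_lt ht,
    rough_of_forall_lt hu'⟩
  · rintro rfl
    exact absurd (hu' 2 Nat.prime_two (dvd_zero 2)) (by omega)
  · intro p hp hpm
    by_cases hpK : p ≤ K
    · refine ⟨K, ?_, (Nat.lt_pow_self hp.one_lt).le⟩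
      by_cases hpn : p ∣ n
      · exact (hnot p hp hpm ((dvd_pow_self p (hK0 p hp hpK)).trans (hcaseD p hp hpK hpn))).elim
      · exact hcaseE p hp hpK hpn
    · exact ⟨1, by simpa using hpm, by simp; omega⟩
  · intro p hp hpm
    by_cases hpK : p ≤ K
    · refine ⟨K, ?_, (Nat.lt_pow_self hp.one_lt).le⟩
      by_cases hpn : p ∣ n
      · exact hcaseD p hp hpK hpn
      · exact (hnot p hp ((dvd_pow_self p (hK0 p hp hpK)).trans (hcaseE p hp hpK hpn)) hpm).elim
    · exact ⟨1, by simpa using hpm, by simp; omega⟩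

/-! ### From arrays to transversal designs -/

/-- The points are pairs (column, symbol), the groups are the columns, and the blocks are the graphs
of the rows. -/
lemma IsOA.transversalDesign {k n : ℕ} (hk : 2 ≤ k) (hn : 0 < n) {S : Set (Fin k → Fin n)}
    (hS : IsOA S) : Nonempty (TransversalDesign (Fin (k * n)) k n) := by
  classical
  let e : Fin k × Fin n ≃ Fin (k * n) := finProdFinEquiv
  let G : Fin k → Finset (Fin (k * n)) := fun i => Finset.univ.image fun x => e (i, x)
  let B : (Fin k → Fin n) → Finset (Fin (k * n)) := fun r => Finset.univ.image fun i => e (i, r i)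
  have memG : ∀ i p, e p ∈ G i ↔ p.1 = i := by
    rintro i ⟨j, x⟩
    simp [G, eq_comm]
  have memB : ∀ r p, e p ∈ B r ↔ r p.1 = p.2 := by
    rintro r ⟨j, x⟩
    simp [B]
  have hGinj : Function.Injective G := by
    intro i j hij
    have h : e (i, ⟨0, hn⟩) ∈ G i := (memG _ _).2 rfl
    rw [hij] at h
    exact (memG _ _).1 h
  have hBinj : Function.Injective B := by
    intro r r' hr
    funext i
    have h : e (i, r i) ∈ B r := (memB _ _).2 rfl
    rw [hr] at h
    exact ((memB _ _).1 h).symm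
  -- A row is determined by its entries in the first two columns, which are arbitrary.
  have hcard : S.toFinset.card = n ^ 2 := by
    have h01 : (⟨0, by omega⟩ : Fin k) ≠ ⟨1, by omega⟩ := by simp
    have : S.toFinset.card = (Finset.univ : Finset (Fin n × Fin n)).card := by
      refine Finset.card_bij (fun r _ => (r ⟨0, by omega⟩, r ⟨1, by omega⟩)) (by simp) ?_ ?_
      · intro r hr r' hr' h
        exact hS.uniq _ _ h01 r (by simpa using hr) r' (by simpa using hr')
          (Prod.ext_iff.1 h).1 (Prod.ext_iff.1 h).2
      · rintro ⟨x, y⟩ -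
        obtain ⟨r, hr, h1, h2⟩ := hS.ex _ _ h01 x y
        exact ⟨r, by simpa using hr, by simp [h1, h2]⟩
    rw [this]
    simp [sq]
  refine ⟨{
    groups := Finset.univ.image G
    blocks := S.toFinset.image B
    groups_card := ?_
    group_size := ?_
    groups_partition := ?_
    blocks_card := ?_
    block_size := ?_
    block_meets := ?_
    pair_cover := ?_ }⟩
  · rw [Finset.card_image_of_injective _ hGinj]
    simp
  · intro g hg
    obtain ⟨i, -, rfl⟩ := Finset.mem_image.1 hg
    rw [Finset.card_image_of_injective]
    · simp
    · intro x y h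
      simpa using h
  · intro x
    obtain ⟨p, rfl⟩ := e.surjective x
    refine ⟨G p.1, ⟨by simp, (memG _ _).2 rfl⟩, ?_⟩
    rintro g ⟨hg, hx⟩
    obtain ⟨i, -, rfl⟩ := Finset.mem_image.1 hg
    rw [(memG _ _).1 hx]
  · rw [Finset.card_image_of_injective _ hBinj, hcard]
  · intro b hb
    obtain ⟨r, -, rfl⟩ := Finset.mem_image.1 hb
    rw [Finset.card_image_of_injective]
    · simp
    · intro i j h
      have := e.injective h
      exact (Prod.ext_iff.1 this).1
  · intro b hb g hg
    obtain ⟨r, -, rfl⟩ := Finset.mem_image.1 hb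
    obtain ⟨i, -, rfl⟩ := Finset.mem_image.1 hg
    refine Finset.card_eq_one.2 ⟨e (i, r i), ?_⟩
    ext x
    obtain ⟨⟨j, y⟩, rfl⟩ := e.surjective x
    rw [Finset.mem_inter, memB, memG, Finset.mem_singleton, e.apply_eq_iff_eq, Prod.mk.injEq]
    constructor
    · rintro ⟨h1, rfl⟩
      exact ⟨rfl, h1.symm⟩
    · rintro ⟨rfl, rfl⟩
      exact ⟨rfl, rfl⟩
  · intro x y hxy
    obtain ⟨⟨i, x⟩, rfl⟩ := e.surjective x
    obtain ⟨⟨j, y⟩, rfl⟩ := e.surjective y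
    have hij : i ≠ j := by
      rintro rfl
      exact hxy (G i) (by simp) ⟨(memG _ _).2 rfl, (memG _ _).2 rfl⟩
    obtain ⟨r, hr, h1, h2⟩ := hS.ex i j hij x y
    refine ⟨B r, ⟨Finset.mem_image_of_mem _ (by simpa using hr), (memB _ _).2 h1,
      (memB _ _).2 h2⟩, ?_⟩
    rintro b ⟨hb, hbx, hby⟩
    obtain ⟨r', hr', rfl⟩ := Finset.mem_image.1 hb
    have h3 : r' i = x := (memB _ _).1 hbx
    have h4 : r' j = y := (memB _ _).1 hby
    rw [hS.uniq i j hij r' (by simpa using hr') r hr (h3.trans h1.symm) (h4.trans h2.symm)]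

/-- For every `k ≥ 2` there exists `n(k)` such that for every `n > n(k)` there
is a transversal design `TD(k,n)`. -/
theorem statement18 (k : ℕ) (hk : 2 ≤ k) :
    ∃ N : ℕ, ∀ n : ℕ, N < n →
      Nonempty (TransversalDesign (Fin (k * n)) k n) := by
  obtain ⟨N, hN⟩ := exists_rough_decomposition (k + 1) (by omega)
  refine ⟨N, fun n hn => ?_⟩
  obtain ⟨m, t, u, rfl, hut, hm, ht, hu, hm1, hm2, ht1, hu1⟩ := hN n hn
  have hle : k ≤ k + 1 := k.le_succ
  have h : HasOA k ((Fin t × Fin m) ⊕ Fin u) :=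
    HasOA.wilson hk (Fin.castLEEmb hut) (Rough.hasOA t ht ht1) ((hm1.mono hle).hasOA m hm)
      (((hm2.mono hle).hasOA (m + 1) m.succ_ne_zero).congr finSuccEquivLast.symm)
      ((hu1.mono hle).hasOA u hu)
  have g : Fin (m * t + u) ≃ (Fin t × Fin m) ⊕ Fin u :=
    finSumFinEquiv.symm.trans
      (Equiv.sumCongr (finProdFinEquiv.symm.trans (Equiv.prodComm _ _)) (Equiv.refl _))
  obtain ⟨S, hS⟩ := h.congr g
  exact hS.transversalDesign hk (by omega)
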